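/- Let Φ be a stationary random measure on ℝ^d with intensity λ_Φ ∈ (0,∞) and Palm distribution P_Φ. Then P_Φ, regarded as the law of a random element of M(ℝ^d), is mass-stationary: for every translation-covariant measurable g : M(ℝ^d) × ℝ^d × ℝ^d → [0,∞], ∫_{M(ℝ^d)} ∫ g(ψ, 0, y) dψ(y) dP_Φ(ψ) = ∫_{M(ℝ^d)} ∫ g(ψ, y, 0) dψ(y) dP_Φ(ψ). -/

import Mathlib

open MeasureTheory ENNReal

noncomputable section

/-- `ℝ^d`. -/
abbrev Vec (d : ℕ) := Fin d → ℝ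

/-- The shift `T_t ψ`, defined by `(T_t ψ)(A) = ψ(A + t)`. -/
def shiftM {d : ℕ} (t : Vec d) (ψ : Measure (Vec d)) : Measure (Vec d) :=
  ψ.map (fun x => x - t)

/-- A measure is in `M(ℝ^d)` iff it is finite on bounded sets. -/
def BddFinite {d : ℕ} (ψ : Measure (Vec d)) : Prop :=
  ∀ s : Set (Vec d), Bornology.IsBounded s → ψ s < ⊤

/-- Translation covariance of `g : M(ℝ^d) × ℝ^d × ℝ^d → [0,∞]`. -/
def Covariant3 {d : ℕ} (g : Measure (Vec d) → Vec d → Vec d → ℝ≥0∞) : Prop :=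
  ∀ (t x y : Vec d) (ψ : Measure (Vec d)), g (shiftM t ψ) (x - t) (y - t) = g ψ x y

/-- A random measure `Ψ` on a probability space `(Ω, P)` is mass-stationary if the mass
transport principle holds for every translation-covariant measurable `g`. -/
def MassStationary {d : ℕ} {Ω : Type*} [MeasurableSpace Ω] (P : Measure Ω)
    (Ψ : Ω → Measure (Vec d)) : Prop :=
  ∀ g : Measure (Vec d) → Vec d → Vec d → ℝ≥0∞,
    Measurable (fun p : Measure (Vec d) × Vec d × Vec d => g p.1 p.2.1 p.2.2) →
    Covariant3 g →
    ∫⁻ ω, (∫⁻ y, g (Ψ ω) 0 y ∂(Ψ ω)) ∂P = ∫⁻ ω, (∫⁻ y, g (Ψ ω) y 0 ∂(Ψ ω)) ∂P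

/-- Mass-stationarity expressed in terms of the law `Q` of a random measure on `ℝ^d`. -/
def MassStationaryLaw {d : ℕ} (Q : Measure (Measure (Vec d))) : Prop :=
  ∀ g : Measure (Vec d) → Vec d → Vec d → ℝ≥0∞,
    Measurable (fun p : Measure (Vec d) × Vec d × Vec d => g p.1 p.2.1 p.2.2) →
    Covariant3 g →
    ∫⁻ ψ, (∫⁻ y, g ψ 0 y ∂ψ) ∂Q = ∫⁻ ψ, (∫⁻ y, g ψ y 0 ∂ψ) ∂Q

/-- The unit box `[0,1)^d`. -/
def unitBox (d : ℕ) : Set (Vec d) := Set.univ.pi fun _ : Fin d => Set.Ico (0 : ℝ) 1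

/-!
Integrating out a translation shows that, against a shift-invariant measure, a weight evaluated at
one equivariant location can be moved to another one (`lintegral_mul_lintegral_weight_comp`). The
source and the target of a transport are two such locations under the Campbell measure
`P(dω) κ(ω, dx) η(ω, dy)`, and the two sides of the mass transport principle are the integrals of
`g` weighted at the source and at the target.

Campbell measures and Fubini need s-finite kernels, whereas `Measure G` contains measures that are
not s-finite, so the argument runs on the space of locally finite measures.
-/

open ProbabilityTheory Set

section Kernels

variable {α β : Type*} [MeasurableSpace α] [MeasurableSpace β]

lemma isSFiniteKernel_of_forall_isFiniteMeasure (κ : Kernel α β)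
    (hκ : ∀ a, IsFiniteMeasure (κ a)) : IsSFiniteKernel κ := by
  classical
  let level (n : ℕ) : Set α := {a | ⌊(κ a univ).toNNReal⌋₊ = n}
  have measurableSet_level (n : ℕ) : MeasurableSet (level n) :=
    (Nat.measurable_floor.comp (κ.measurable_coe .univ).ennreal_toNNReal)
      (measurableSet_singleton n)
  let piece (n : ℕ) : Kernel α β := Kernel.piecewise (measurableSet_level n) κ 0
  have isFiniteKernel_piece (n : ℕ) : IsFiniteKernel (piece n) := by
    refine ⟨n + 1, by finiteness, fun a => ?_⟩
    by_cases ha : a ∈ level n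
    · have hlt : (κ a univ).toNNReal < n + 1 := ha ▸ Nat.lt_floor_add_one _
      rw [Kernel.piecewise_apply, if_pos ha, ← ENNReal.coe_toNNReal (measure_ne_top (κ a) univ)]
      exact_mod_cast hlt.le
    · simp [piece, Kernel.piecewise_apply, ha]
  have eq_sum_piece : κ = Kernel.sum piece := by
    ext a s hs
    rw [Kernel.sum_apply' _ _ hs, tsum_eq_single ⌊(κ a univ).toNNReal⌋₊]
    · simp [piece, Kernel.piecewise_apply, level]
    · intro n hn
      simp [piece, Kernel.piecewise_apply, level, hn.symm]
  exact eq_sum_piece ▸ inferInstance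

lemma isSFiniteKernel_of_iUnion_eq_univ (κ : Kernel α β) {S : ℕ → Set β}
    (hS : ∀ n, MeasurableSet (S n)) (hcover : ⋃ n, S n = univ) (hfin : ∀ a n, κ a (S n) < ⊤) :
    IsSFiniteKernel κ := by
  have hD (n : ℕ) : MeasurableSet (disjointed S n) := .disjointed hS n
  have isSFiniteKernel_restrict (n : ℕ) : IsSFiniteKernel (κ.restrict (hD n)) := by
    refine isSFiniteKernel_of_forall_isFiniteMeasure _ fun a => ⟨?_⟩
    rw [Kernel.restrict_apply, Measure.restrict_apply_univ]
    exact (measure_mono (disjointed_subset S n)).trans_lt (hfin a n)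
  have eq_sum_restrict : κ = Kernel.sum fun n => κ.restrict (hD n) := by
    ext1 a
    rw [Kernel.sum_apply]
    simp only [Kernel.restrict_apply]
    rw [← Measure.restrict_iUnion (disjoint_disjointed S) hD, iUnion_disjointed, hcover,
      Measure.restrict_univ]
  exact eq_sum_restrict ▸ inferInstance

lemma measurePreserving_prodMap_compProd {P : Measure α} [SFinite P] {κ : Kernel α β}
    [IsSFiniteKernel κ] {T : α → α} {S : β → β} (hT : MeasurePreserving T P P) (hS : Measurable S)
    (hκ : ∀ a, κ (T a) = (κ a).map S) :
    MeasurePreserving (Prod.map T S) (P ⊗ₘ κ) (P ⊗ₘ κ) := by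
  have hTS : Measurable (Prod.map T S) := hT.measurable.prodMap hS
  refine ⟨hTS, ?_⟩
  ext s hs
  calc (P ⊗ₘ κ).map (Prod.map T S) s
      = ∫⁻ a, κ a (Prod.mk a ⁻¹' (Prod.map T S ⁻¹' s)) ∂P := by
        rw [Measure.map_apply hTS hs, Measure.compProd_apply (hTS hs)]
    _ = ∫⁻ a, κ (T a) (Prod.mk (T a) ⁻¹' s) ∂P := by
        congr with a
        rw [hκ, Measure.map_apply hS (measurable_prodMk_left hs)]
        rfl
    _ = (P ⊗ₘ κ) s := by
        rw [hT.lintegral_comp (Kernel.measurable_kernel_prodMk_left hs), Measure.compProd_apply hs]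

end Kernels

section PalmMeasure

variable {G Ω : Type*} [MeasurableSpace G] [MeasurableSpace Ω] [VAdd G Ω] {P : Measure Ω}
  {κ : Kernel Ω G} {w : G → ℝ≥0∞}

/-- The unnormalised Palm measure of the random measure `κ` with respect to `P`,
`A ↦ ∫ ∫ w(x) 1_A(x +ᵥ ω) κ(ω, dx) P(dω)`. The customary choice of the weight `w` is the indicator
of a set of unit volume. As `⊗ₘ` is `0` outside the s-finite case, so is this measure. -/
def palmMeasure (P : Measure Ω) (κ : Kernel Ω G) (w : G → ℝ≥0∞) : Measure Ω :=
  ((P ⊗ₘ κ).withDensity fun p => w p.2).map fun p => p.2 +ᵥ p.1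

lemma lintegral_palmMeasure [MeasurableVAdd₂ G Ω] [SFinite P] [IsSFiniteKernel κ]
    (hw : Measurable w) {f : Ω → ℝ≥0∞} (hf : Measurable f) :
    ∫⁻ ω, f ω ∂(palmMeasure P κ w) = ∫⁻ ω, ∫⁻ x, w x * f (x +ᵥ ω) ∂(κ ω) ∂P := by
  have hvadd : Measurable fun p : Ω × G => p.2 +ᵥ p.1 := measurable_snd.vadd measurable_fst
  rw [palmMeasure, lintegral_map hf hvadd,
    lintegral_withDensity_eq_lintegral_mul _ (by fun_prop) (by fun_prop),
    Measure.lintegral_compProd (by fun_prop)]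
  rfl

end PalmMeasure

section MassTransport

variable {G : Type*} [AddCommGroup G] [MeasurableSpace G] [MeasurableAdd₂ G] [MeasurableNeg G]
  {μ : Measure G} [SFinite μ] [μ.IsAddLeftInvariant] [μ.IsNegInvariant] {v w : G → ℝ≥0∞}

lemma lintegral_mul_lintegral_weight_comp {E : Type*} [MeasurableSpace E] {ρ : Measure E}
    [SFinite ρ] {θ : G → E → E} (hθ : ∀ t, MeasurePreserving (θ t) ρ ρ)
    {X Y : E → G} (hX : Measurable X) (hY : Measurable Y)
    (hXθ : ∀ t p, X (θ t p) = X p - t) (hYθ : ∀ t p, Y (θ t p) = Y p - t)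
    {f : E → ℝ≥0∞} (hf : Measurable f) (hfθ : ∀ t p, f (θ t p) = f p)
    (hv : Measurable v) (hw : Measurable w) :
    (∫⁻ t, v t ∂μ) * ∫⁻ p, w (X p) * f p ∂ρ = (∫⁻ t, w t ∂μ) * ∫⁻ p, v (Y p) * f p ∂ρ := by
  calc (∫⁻ t, v t ∂μ) * ∫⁻ p, w (X p) * f p ∂ρ
      = ∫⁻ p, ∫⁻ t, v (Y p - t) * (w (X p) * f p) ∂μ ∂ρ := by
        rw [← lintegral_const_mul _ (by fun_prop)]
        congr with p
        rw [lintegral_mul_const _ (by fun_prop), lintegral_sub_left_eq_self]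
    _ = ∫⁻ t, ∫⁻ p, v (Y p - t) * (w (X p) * f p) ∂ρ ∂μ :=
        lintegral_lintegral_swap (by unfold Function.uncurry; fun_prop)
    _ = ∫⁻ t, ∫⁻ p, w (X p + t) * (v (Y p) * f p) ∂ρ ∂μ := by
        congr with t
        rw [← (hθ t).lintegral_comp (f := fun p => w (X p + t) * (v (Y p) * f p)) (by fun_prop)]
        congr with p
        rw [hXθ, hYθ, hfθ, sub_add_cancel, mul_left_comm]
    _ = ∫⁻ p, ∫⁻ t, w (X p + t) * (v (Y p) * f p) ∂μ ∂ρ :=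
        lintegral_lintegral_swap (by unfold Function.uncurry; fun_prop)
    _ = (∫⁻ t, w t ∂μ) * ∫⁻ p, v (Y p) * f p ∂ρ := by
        rw [← lintegral_const_mul _ (by fun_prop)]
        congr with p
        rw [lintegral_mul_const _ (by fun_prop), lintegral_add_left_eq_self]

variable {Ω : Type*} [MeasurableSpace Ω] [VAdd G Ω]

/-- Equivariance of a random measure `κ` under a flow `ω ↦ t +ᵥ ω`: moving `ω` by `t` recentres
`κ ω` at `t`. -/
def IsShiftEquivariant (κ : Kernel Ω G) : Prop :=
  ∀ (t : G) (ω : Ω), κ (t +ᵥ ω) = (κ ω).map (· - t)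

variable {κ η : Kernel Ω G} [IsSFiniteKernel κ] [IsSFiniteKernel η]

lemma IsShiftEquivariant.prod_apply_vadd (hκ : IsShiftEquivariant κ) (hη : IsShiftEquivariant η)
    (t : G) (ω : Ω) :
    (κ ×ₖ η) (t +ᵥ ω) = ((κ ×ₖ η) ω).map (Prod.map (· - t) (· - t)) := by
  rw [Kernel.prod_apply, Kernel.prod_apply, hκ, hη,
    Measure.map_prod_map _ _ (by fun_prop) (by fun_prop)]

variable [MeasurableVAdd₂ G Ω] {P : Measure Ω} [SFinite P]

lemma lintegral_lintegral_palmMeasure (hη : IsShiftEquivariant η) (hw : Measurable w)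
    {f : Ω → G → ℝ≥0∞} (hf : Measurable (Function.uncurry f)) :
    ∫⁻ ω, ∫⁻ y, f ω y ∂(η ω) ∂(palmMeasure P κ w) =
      ∫⁻ ω, ∫⁻ x, ∫⁻ y, w x * f (x +ᵥ ω) (y - x) ∂(η ω) ∂(κ ω) ∂P := by
  refine (lintegral_palmMeasure hw hf.lintegral_kernel_prod_right').trans ?_
  simp only [Function.uncurry_apply_pair]
  congr with ω
  congr with x
  rw [hη, lintegral_map hf.of_uncurry_left (by fun_prop), lintegral_const_mul]
  exact hf.of_uncurry_left.comp (by fun_prop)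

/-- Neveu's exchange formula. -/
theorem lintegral_lintegral_palmMeasure_comm [VAddInvariantMeasure G Ω P]
    (hκ : IsShiftEquivariant κ) (hη : IsShiftEquivariant η)
    (hw : Measurable w) (hw_zero : ∫⁻ t, w t ∂μ ≠ 0) (hw_top : ∫⁻ t, w t ∂μ ≠ ⊤)
    {g : Ω → G → G → ℝ≥0∞} (hg : Measurable fun p : Ω × G × G => g p.1 p.2.1 p.2.2)
    (hg_cov : ∀ t ω x y, g (t +ᵥ ω) (x - t) (y - t) = g ω x y) :
    ∫⁻ ω, ∫⁻ y, g ω 0 y ∂(η ω) ∂(palmMeasure P κ w) =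
      ∫⁻ ω, ∫⁻ x, g ω x 0 ∂(κ ω) ∂(palmMeasure P η w) := by
  have hg_source (ω : Ω) (x y : G) : g (x +ᵥ ω) 0 (y - x) = g ω x y := by
    rw [← hg_cov x ω x y, sub_self]
  have hg_target (ω : Ω) (x y : G) : g (y +ᵥ ω) (x - y) 0 = g ω x y := by
    rw [← hg_cov y ω x y, sub_self]
  have source_eq : ∫⁻ ω, ∫⁻ y, g ω 0 y ∂(η ω) ∂(palmMeasure P κ w) =
      ∫⁻ p, w p.2.1 * g p.1 p.2.1 p.2.2 ∂(P ⊗ₘ (κ ×ₖ η)) := by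
    rw [lintegral_lintegral_palmMeasure hη hw (f := fun ω y => g ω 0 y)
      (hg.comp (by fun_prop : Measurable fun p : Ω × G => (p.1, (0 : G), p.2))),
      Measure.lintegral_compProd (by fun_prop)]
    congr with ω
    rw [Kernel.lintegral_prod _ _ _ (by fun_prop)]
    simp only [hg_source]
  have target_eq : ∫⁻ ω, ∫⁻ x, g ω x 0 ∂(κ ω) ∂(palmMeasure P η w) =
      ∫⁻ p, w p.2.2 * g p.1 p.2.1 p.2.2 ∂(P ⊗ₘ (κ ×ₖ η)) := by
    rw [lintegral_lintegral_palmMeasure hκ hw (f := fun ω x => g ω x 0)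
      (hg.comp (by fun_prop : Measurable fun p : Ω × G => (p.1, p.2, (0 : G)))),
      Measure.lintegral_compProd (by fun_prop)]
    congr with ω
    rw [Kernel.lintegral_prod_symm _ _ _ (by fun_prop)]
    simp only [hg_target]
  have hshift (t : G) := measurePreserving_prodMap_compProd (measurePreserving_vadd t P)
    (by fun_prop) (hκ.prod_apply_vadd hη t)
  rw [source_eq, target_eq, ← ENNReal.mul_right_inj hw_zero hw_top]
  exact lintegral_mul_lintegral_weight_comp hshift (by fun_prop) (by fun_prop) (fun _ _ => rfl)
    (fun _ _ => rfl) hg (fun t p => hg_cov t p.1 p.2.1 p.2.2) hw hw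

end MassTransport

section LocallyFinite

variable {X : Type*} [TopologicalSpace X]

lemma iUnion_interior_compactExhaustion (K : CompactExhaustion X) : ⋃ n, interior (K n) = univ :=
  eq_univ_of_forall fun x =>
    have ⟨n, hn⟩ := K.exists_mem x
    mem_iUnion.2 ⟨n + 1, K.subset_interior_succ n hn⟩

variable [MeasurableSpace X]

lemma isLocallyFiniteMeasure_map_homeomorph [BorelSpace X] (e : X ≃ₜ X) (ψ : Measure X)
    [IsLocallyFiniteMeasure ψ] : IsLocallyFiniteMeasure (ψ.map e) := by
  refine ⟨fun x => ?_⟩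
  obtain ⟨U, hxU, hU, hψU⟩ := ψ.exists_isOpen_measure_lt_top (e.symm x)
  refine ⟨e.symm ⁻¹' U, (hU.preimage e.symm.continuous).mem_nhds hxU, ?_⟩
  rwa [← e.toMeasurableEquiv_coe, MeasurableEquiv.map_apply, e.toMeasurableEquiv_coe,
    ← preimage_comp, e.symm_comp_self, preimage_id]

lemma isLocallyFiniteMeasure_iff_interior_lt_top (K : CompactExhaustion X) (ψ : Measure X) :
    IsLocallyFiniteMeasure ψ ↔ ∀ n, ψ (interior (K n)) < ⊤ := by
  refine ⟨fun _ n => (measure_mono interior_subset).trans_lt (K.isCompact n).measure_lt_top,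
    fun h => ⟨fun x => ?_⟩⟩
  obtain ⟨n, hn⟩ := K.exists_mem x
  exact ⟨interior (K (n + 1)), isOpen_interior.mem_nhds (K.subset_interior_succ n hn), h (n + 1)⟩

lemma measurableSet_isLocallyFiniteMeasure [OpensMeasurableSpace X] [SigmaCompactSpace X]
    [WeaklyLocallyCompactSpace X] : MeasurableSet {ψ : Measure X | IsLocallyFiniteMeasure ψ} := by
  simp only [isLocallyFiniteMeasure_iff_interior_lt_top (CompactExhaustion.choice X), ofPred_forall]
  exact .iInter fun n => measurableSet_lt
    (Measure.measurable_coe isOpen_interior.measurableSet) measurable_const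

variable (X) in
/-- The space `M(X)` of locally finite measures on `X`, with the σ-algebra generated by the
evaluations `ψ ↦ ψ(B)`. -/
abbrev LocallyFiniteMeasure : Type _ := {ψ : Measure X // IsLocallyFiniteMeasure ψ}

namespace LocallyFiniteMeasure

variable (X) in
/-- The canonical random measure on `M(X)`, sending `ψ` to itself. -/
def kernel : Kernel (LocallyFiniteMeasure X) X := ⟨Subtype.val, measurable_subtype_coe⟩

lemma kernel_apply (ψ : LocallyFiniteMeasure X) : kernel X ψ = ψ := rfl

instance [OpensMeasurableSpace X] [SigmaCompactSpace X] [WeaklyLocallyCompactSpace X] :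
    IsSFiniteKernel (kernel X) :=
  isSFiniteKernel_of_iUnion_eq_univ (kernel X) (fun _ => isOpen_interior.measurableSet)
    (iUnion_interior_compactExhaustion (CompactExhaustion.choice X))
    fun ψ => (isLocallyFiniteMeasure_iff_interior_lt_top _ _).1 ψ.2

lemma exists_measurable_ae_eq_coe {Ω : Type*} [MeasurableSpace Ω] {P : Measure Ω}
    {Φ : Ω → Measure X} (hΦ : AEMeasurable Φ P) (hΦ_fin : ∀ᵐ ω ∂P, IsLocallyFiniteMeasure (Φ ω)) :
    ∃ Φ' : Ω → LocallyFiniteMeasure X, Measurable Φ' ∧ Φ =ᵐ[P] fun ω => (Φ' ω : Measure X) := by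
  obtain ⟨Φ', hΦ', hrange, hΦΦ'⟩ := hΦ.exists_ae_eq_range_subset hΦ_fin
    ⟨0, inferInstanceAs (IsLocallyFiniteMeasure 0)⟩
  exact ⟨fun ω => ⟨Φ' ω, hrange (mem_range_self ω)⟩, hΦ'.subtype_mk, hΦΦ'⟩

variable {G : Type*} [AddCommGroup G] [TopologicalSpace G] [IsTopologicalAddGroup G]
  [MeasurableSpace G] [BorelSpace G]

/-- The shift `T_t ψ = ψ(· + t)`. -/
instance : VAdd G (LocallyFiniteMeasure G) where
  vadd t ψ := ⟨ψ.1.map (· - t),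
    have := ψ.2
    isLocallyFiniteMeasure_map_homeomorph (Homeomorph.subRight t) ψ.1⟩

lemma coe_vadd (t : G) (ψ : LocallyFiniteMeasure G) :
    ((t +ᵥ ψ : LocallyFiniteMeasure G) : Measure G) = (ψ : Measure G).map (· - t) := rfl

lemma isShiftEquivariant_kernel : IsShiftEquivariant (kernel G) := coe_vadd

variable [SecondCountableTopology G] [WeaklyLocallyCompactSpace G]

instance : MeasurableVAdd₂ G (LocallyFiniteMeasure G) where
  measurable_vadd := by
    refine (Measure.measurable_of_measurable_coe _ fun s hs => ?_).subtype_mk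
    have hsub : MeasurableSet {q : (G × LocallyFiniteMeasure G) × G | q.2 - q.1.1 ∈ s} :=
      (measurable_snd.sub measurable_fst.fst) hs
    convert Kernel.measurable_kernel_prodMk_left (κ := (kernel G).prodMkLeft G) hsub using 2 with p
    exact Measure.map_apply (by fun_prop) hs

end LocallyFiniteMeasure

end LocallyFinite

section RandomMeasure

open LocallyFiniteMeasure

variable {G : Type*} [AddCommGroup G] [TopologicalSpace G] [IsTopologicalAddGroup G]
  [SecondCountableTopology G] [WeaklyLocallyCompactSpace G] [MeasurableSpace G] [BorelSpace G]
  {Ω : Type*} [MeasurableSpace Ω] {P : Measure Ω}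

lemma vaddInvariantMeasure_map {Φ : Ω → LocallyFiniteMeasure G} (hΦ : Measurable Φ)
    (hstat : ∀ t : G, P.map (fun ω => (Φ ω : Measure G).map (· - t)) =
      P.map fun ω => (Φ ω : Measure G)) :
    VAddInvariantMeasure G (LocallyFiniteMeasure G) (P.map Φ) := by
  refine ⟨fun t s hs => ?_⟩
  obtain ⟨A, hA, rfl⟩ := hs
  have hval : Measurable fun ω => (Φ ω : Measure G) := hΦ.subtype_val
  have hshift : Measurable fun ω => (Φ ω : Measure G).map (· - t) :=
    (Measure.measurable_map _ (by fun_prop)).comp hval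
  have hvalA := measurable_subtype_coe (p := fun ψ : Measure G => IsLocallyFiniteMeasure ψ) hA
  have h := DFunLike.congr_fun (hstat t) A
  rw [Measure.map_apply hshift hA, Measure.map_apply hval hA] at h
  rw [Measure.map_apply hΦ (measurable_const_vadd t hvalA), Measure.map_apply hΦ hvalA]
  exact h

lemma palmMeasure_map_coe_apply [SFinite P] {Φ : Ω → LocallyFiniteMeasure G} (hΦ : Measurable Φ)
    {B : Set G} (hB : MeasurableSet B) {A : Set (Measure G)} (hA : MeasurableSet A) :
    (palmMeasure (P.map Φ) (kernel G) (B.indicator 1)).map Subtype.val A =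
      ∫⁻ ω, ∫⁻ x in B, A.indicator (fun _ => 1) ((Φ ω : Measure G).map (· - x)) ∂(Φ ω) ∂P := by
  have hw : Measurable (B.indicator (1 : G → ℝ≥0∞)) := measurable_one.indicator hB
  have hf : Measurable fun ψ : LocallyFiniteMeasure G =>
      A.indicator (fun _ => (1 : ℝ≥0∞)) (ψ : Measure G) :=
    (measurable_const.indicator hA).comp measurable_subtype_coe
  have hinner : Measurable fun ψ : LocallyFiniteMeasure G => ∫⁻ x, B.indicator 1 x *
      A.indicator (fun _ => (1 : ℝ≥0∞)) ((x +ᵥ ψ : LocallyFiniteMeasure G) : Measure G)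
        ∂(kernel G ψ) :=
    Measurable.lintegral_kernel_prod_right' (f := fun p : LocallyFiniteMeasure G × G =>
      B.indicator 1 p.2 * A.indicator (fun _ => (1 : ℝ≥0∞)) (p.2 +ᵥ p.1).1)
      ((hw.comp measurable_snd).mul (hf.comp (measurable_snd.vadd measurable_fst)))
  rw [← lintegral_indicator_one hA, lintegral_map (measurable_one.indicator hA)
    measurable_subtype_coe]
  refine (lintegral_palmMeasure hw hf).trans ?_
  rw [lintegral_map hinner hΦ]
  congr with ω
  rw [kernel_apply, ← lintegral_indicator hB]
  congr with x
  by_cases hx : x ∈ B <;> simp [hx, coe_vadd]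

theorem stmt14_general [SFinite P] {μ : Measure G} [SFinite μ] [μ.IsAddLeftInvariant]
    [μ.IsNegInvariant] {Φ : Ω → Measure G} (hΦ : AEMeasurable Φ P)
    (hΦ_fin : ∀ᵐ ω ∂P, IsLocallyFiniteMeasure (Φ ω))
    (hstat : ∀ t : G, P.map (fun ω => (Φ ω).map (· - t)) = P.map Φ)
    {B : Set G} (hB : MeasurableSet B) (hB_zero : μ B ≠ 0) (hB_top : μ B ≠ ⊤)
    {c : ℝ≥0∞} {PΦ : Measure (Measure G)}
    (hPalm : ∀ A : Set (Measure G), MeasurableSet A → PΦ A = c *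
      ∫⁻ ω, ∫⁻ x in B, A.indicator (fun _ => 1) ((Φ ω).map (· - x)) ∂(Φ ω) ∂P)
    {g : Measure G → G → G → ℝ≥0∞}
    (hg : Measurable fun p : Measure G × G × G => g p.1 p.2.1 p.2.2)
    (hg_cov : ∀ t ψ x y, g (ψ.map (· - t)) (x - t) (y - t) = g ψ x y) :
    ∫⁻ ψ, ∫⁻ y, g ψ 0 y ∂ψ ∂PΦ = ∫⁻ ψ, ∫⁻ y, g ψ y 0 ∂ψ ∂PΦ := by
  obtain ⟨Φ', hΦ', hΦΦ'⟩ := exists_measurable_ae_eq_coe hΦ hΦ_fin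
  have hinv : VAddInvariantMeasure G (LocallyFiniteMeasure G) (P.map Φ') := by
    refine vaddInvariantMeasure_map hΦ' fun t => ?_
    rw [← Measure.map_congr hΦΦ', ← hstat t]
    exact Measure.map_congr (hΦΦ'.symm.fun_comp (Measure.map (· - t)))
  have hPΦ : PΦ = c • (palmMeasure (P.map Φ') (kernel G) (B.indicator 1)).map Subtype.val := by
    ext A hA
    rw [hPalm A hA, Measure.smul_apply, palmMeasure_map_coe_apply hΦ' hB hA, smul_eq_mul]
    congr 1
    refine lintegral_congr_ae ?_
    filter_upwards [hΦΦ'] with ω hω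
    rw [hω]
  have hcoe : MeasurableEmbedding (Subtype.val : LocallyFiniteMeasure G → Measure G) :=
    .subtype_coe measurableSet_isLocallyFiniteMeasure
  rw [hPΦ, lintegral_smul_measure, lintegral_smul_measure, hcoe.lintegral_map, hcoe.lintegral_map]
  congr 1
  rw [← lintegral_indicator_one hB] at hB_zero hB_top
  exact lintegral_lintegral_palmMeasure_comm isShiftEquivariant_kernel isShiftEquivariant_kernel
    (measurable_one.indicator hB) hB_zero hB_top
    (hg.comp (by fun_prop : Measurable fun p : LocallyFiniteMeasure G × G × G =>
      ((p.1 : Measure G), p.2)))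
    fun t ψ => hg_cov t ψ

end RandomMeasure

section Euclidean

variable {d : ℕ}

lemma BddFinite.isLocallyFiniteMeasure {ψ : Measure (Vec d)} (hψ : BddFinite ψ) :
    IsLocallyFiniteMeasure ψ :=
  ⟨fun x => ⟨Metric.ball x 1, Metric.ball_mem_nhds x one_pos, hψ _ Metric.isBounded_ball⟩⟩

lemma measurableSet_unitBox : MeasurableSet (unitBox d) :=
  .univ_pi fun _ => measurableSet_Ico

lemma volume_unitBox : volume (unitBox d) = 1 := by
  simp [unitBox, Real.volume_pi_Ico]

end Euclidean

/-- The Palm distribution `P_Φ` of a stationary random measure `Φ` on `ℝ^d`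
with intensity `λ_Φ ∈ (0,∞)`, defined by
`P_Φ(B) = λ_Φ⁻¹ E[∫_{[0,1)^d} 1_B(T_x Φ) dΦ(x)]`, is mass-stationary. -/
theorem stmt14 {d : ℕ} {Ω : Type*} [MeasurableSpace Ω] (P : Measure Ω) [IsProbabilityMeasure P]
    (Φ : Ω → Measure (Vec d)) (hΦm : Measurable Φ)
    (hbf : ∀ᵐ ω ∂P, BddFinite (Φ ω))
    (hstat : ∀ t : Vec d, P.map (fun ω => shiftM t (Φ ω)) = P.map Φ)
    (hpos : 0 < ∫⁻ ω, Φ ω (unitBox d) ∂P)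
    (hfin : (∫⁻ ω, Φ ω (unitBox d) ∂P) < ⊤)
    (PΦ : Measure (Measure (Vec d)))
    (hPalm : ∀ B : Set (Measure (Vec d)), MeasurableSet B →
      PΦ B = (∫⁻ ω, Φ ω (unitBox d) ∂P)⁻¹ *
        ∫⁻ ω, (∫⁻ x in unitBox d,
          B.indicator (fun _ => (1 : ℝ≥0∞)) (shiftM x (Φ ω)) ∂(Φ ω)) ∂P) :
    MassStationaryLaw PΦ := by
  intro g hg hg_cov
  exact stmt14_general (μ := volume) hΦm.aemeasurable
    (hbf.mono fun _ => BddFinite.isLocallyFiniteMeasure) hstat measurableSet_unitBox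
    (by simp [volume_unitBox]) (by simp [volume_unitBox]) hPalm hg fun t ψ x y => hg_cov t x y ψ
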